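/- Let G and G' be bow-free acyclic path diagrams on the same finite vertex type V that are algebraically equivalent, i.e. A(G) = A(G'). Then G and G' have the same skeleton and the same v-structures. (Corollary 1 of the paper.) -/

import Mathlib

open Matrix

structure MixedGraph (V : Type*) where
  D : V → V → Prop
  B : V → V → Prop
  symm : ∀ v w, B v w → B w v
  irrefl : ∀ v, ¬ B v v

namespace MixedGraph

variable {V : Type*}

/-- The graph is acyclic: no directed cycles. -/
def Acyclic (G : MixedGraph V) : Prop := ∀ v, ¬ Relation.TransGen G.D v v

/-- The graph is simple: for distinct `v, w`, at most one of
`D v w`, `D w v`, `B v w` holds. -/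
def Simple (G : MixedGraph V) : Prop :=
  ∀ v w, v ≠ w →
    ¬ (G.D v w ∧ G.D w v) ∧ ¬ (G.D v w ∧ G.B v w) ∧ ¬ (G.D w v ∧ G.B v w)

/-- A bow-free acyclic path diagram: a simple acyclic mixed graph. -/
def IsBAP (G : MixedGraph V) : Prop := G.Acyclic ∧ G.Simple

/-- `Λ` is compatible with `G`. -/
def LamCompat (G : MixedGraph V) (Λ : Matrix V V ℝ) : Prop :=
  ∀ v w, ¬ G.D v w → Λ v w = 0

/-- `Ω` is compatible with `G`. -/
def OmCompat [Fintype V] (G : MixedGraph V) (Ω : Matrix V V ℝ) : Prop :=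
  Ω.PosDef ∧ ∀ v w, v ≠ w → ¬ G.B v w → ¬ G.B w v → Ω v w = 0

/-- The model `M(G)` of a mixed graph. -/
def model [Fintype V] [DecidableEq V] (G : MixedGraph V) : Set (Matrix V V ℝ) :=
  {S | ∃ Λ Ω : Matrix V V ℝ, G.LamCompat Λ ∧ G.OmCompat Ω ∧
    S = ((1 - Λ)⁻¹)ᵀ * Ω * (1 - Λ)⁻¹}

/-- The algebraic model `A(G)`: the real Zariski closure of `M(G)`. -/
def algModel [Fintype V] [DecidableEq V] (G : MixedGraph V) : Set (Matrix V V ℝ) :=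
  {S | ∀ p : MvPolynomial (V × V) ℝ,
    (∀ T ∈ G.model, MvPolynomial.eval (fun e => T e.1 e.2) p = 0) →
    MvPolynomial.eval (fun e => S e.1 e.2) p = 0}

/-- The skeleton (adjacency relation) of `G`. -/
def adj (G : MixedGraph V) (v w : V) : Prop :=
  v ≠ w ∧ (G.D v w ∨ G.D w v ∨ G.B v w)

/-- A collider triple of `G`. -/
def ColliderTriple (G : MixedGraph V) (u v w : V) : Prop :=
  u ≠ v ∧ v ≠ w ∧ u ≠ w ∧ (G.D u v ∨ G.B u v) ∧ (G.D w v ∨ G.B w v)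

/-- A v-structure of `G`. -/
def VStructure (G : MixedGraph V) (u v w : V) : Prop :=
  G.ColliderTriple u v w ∧ ¬ G.adj u w

end MixedGraph

/-! For a bow-free acyclic path diagram the edge coefficients are rational functions of the
covariance matrix which are regular at the identity matrix. Hence a polynomial curve in the
algebraic model that passes through the identity lifts to edge coefficients which are formal power
series. Expanding the relations `Ω v w = 0` to second order shows that at nonadjacent pairs of
vertices the velocity of the curve vanishes and its acceleration is an explicit quadratic function
of its velocity.

These conditions for `G'` are tested on the curve in the model of `G` that switches on all edges
with an arrowhead at a vertex `v`. The velocity condition forces these edges into the skeleton of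
`G'`. Between two of the vertices `u`, `w` so joined to `v` the curve has no acceleration, whereas
an edge `v → u` or `v → w` in `G'` would require one if `u` and `w` are nonadjacent in `G'`. -/

open PowerSeries (coeff constantCoeff)
open scoped Polynomial PowerSeries Topology

section RegularSubring

variable {A B k R : Type*} [CommRing A] [CommRing B] [CommRing k] [CommRing R]

/-- The elements of `B` that are regular at the `k`-point `ε` of `B`: fractions of elements of `A`
whose denominator does not vanish at `ε`. -/
def regularSubring (φ : A →+* B) (ε : B →+* k) : Subring B where
  carrier := {b | ∃ p q, IsUnit (ε (φ q)) ∧ φ q * b = φ p}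
  one_mem' := ⟨1, 1, by simp, by simp⟩
  zero_mem' := ⟨0, 1, by simp, by simp⟩
  neg_mem' := by
    rintro b ⟨p, q, hq, h⟩
    exact ⟨-p, q, hq, by rw [map_neg, ← h, mul_neg]⟩
  mul_mem' := by
    rintro b b' ⟨p, q, hq, h⟩ ⟨p', q', hq', h'⟩
    refine ⟨p * p', q * q', by simpa only [map_mul] using hq.mul hq', ?_⟩
    rw [map_mul, map_mul, ← h, ← h', mul_mul_mul_comm]
  add_mem' := by
    rintro b b' ⟨p, q, hq, h⟩ ⟨p', q', hq', h'⟩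
    refine ⟨p * q' + q * p', q * q', by simpa only [map_mul] using hq.mul hq', ?_⟩
    simp only [map_add, map_mul, ← h, ← h']
    ring

variable {φ : A →+* B} {ε : B →+* k}

lemma map_mem_regularSubring (a : A) : φ a ∈ regularSubring φ ε :=
  ⟨a, 1, by simp, by simp⟩

lemma mem_regularSubring_of_mul_eq {a b x : B} (ha : a ∈ regularSubring φ ε)
    (hb : b ∈ regularSubring φ ε) (hunit : IsUnit (ε a)) (h : a * x = b) :
    x ∈ regularSubring φ ε := by
  obtain ⟨p, q, hq, hpq⟩ := ha
  obtain ⟨p', q', hq', hpq'⟩ := hb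
  refine ⟨q * p', p * q', ?_, ?_⟩
  · rw [map_mul, ← hpq, map_mul, map_mul]
    exact (hq.mul hunit).mul hq'
  · simp only [map_mul, ← hpq, ← hpq', ← h]
    ring

lemma mem_regularSubring_of_mulVec_eq {n : Type*} [Fintype n] [DecidableEq n]
    {M : Matrix n n B} {x b : n → B} (hM : ∀ i j, M i j ∈ regularSubring φ ε)
    (hb : ∀ i, b i ∈ regularSubring φ ε) (hdet : IsUnit (ε M.det)) (h : M *ᵥ x = b) (i : n) :
    x i ∈ regularSubring φ ε := by
  let M' : Matrix n n (regularSubring φ ε) := of fun i j => ⟨M i j, hM i j⟩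
  have hM' : (regularSubring φ ε).subtype.mapMatrix M' = M := rfl
  have hdet_mem : M.det ∈ regularSubring φ ε := by
    rw [← hM', ← RingHom.map_det]
    exact M'.det.2
  have hadj_mem (i j : n) : M.adjugate i j ∈ regularSubring φ ε := by
    rw [← hM', ← RingHom.map_adjugate]
    exact (M'.adjugate i j).2
  have hcramer : M.det * x i = (M.adjugate *ᵥ b) i := by
    rw [← h, mulVec_mulVec, adjugate_mul, smul_mulVec, one_mulVec]
    rfl
  exact mem_regularSubring_of_mul_eq hdet_mem
    (sum_mem fun j _ => mul_mem (hadj_mem i j) (hb j)) hdet hcramer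

lemma exists_fraction_regularSubring {σ : A →+* R} (hunit : ∀ q, IsUnit (ε (φ q)) → IsUnit (σ q))
    (hker : RingHom.ker φ ≤ RingHom.ker σ) (b : regularSubring φ ε) :
    ∃ r, ∀ p q, φ q * b = φ p → σ q * r = σ p := by
  obtain ⟨p, q, hq, h⟩ := b.2
  obtain ⟨r, hr⟩ := (hunit q hq).dvd (a := σ p)
  refine ⟨r, fun p' q' h' => (hunit q hq).mul_left_cancel ?_⟩
  have hcross : q * p' - q' * p ∈ RingHom.ker φ := by
    rw [RingHom.mem_ker, map_sub, map_mul, map_mul, ← h, ← h']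
    ring
  have hcross' : σ q * σ p' = σ q' * σ p := by
    simpa only [RingHom.mem_ker, map_sub, map_mul, sub_eq_zero] using hker hcross
  rw [hcross', hr]
  ring

lemma exists_ringHom_regularSubring {σ : A →+* R} {χ : R →+* k} [IsLocalHom χ]
    (hχ : ∀ a, χ (σ a) = ε (φ a)) (hker : RingHom.ker φ ≤ RingHom.ker σ) :
    ∃ τ : regularSubring φ ε →+* R,
      (∀ a, τ ⟨φ a, map_mem_regularSubring a⟩ = σ a) ∧ ∀ b, χ (τ b) = ε b := by
  have hunit (q : A) (hq : IsUnit (ε (φ q))) : IsUnit (σ q) :=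
    isUnit_of_map_unit χ _ (by rwa [hχ])
  choose τ hτ using exists_fraction_regularSubring hunit hker
  have huniq {b : regularSubring φ ε} {r : R} {p q : A} (hq : IsUnit (ε (φ q)))
      (h : φ q * b = φ p) (hr : σ q * r = σ p) : τ b = r :=
    (hunit q hq).mul_left_cancel ((hτ b p q h).trans hr.symm)
  refine ⟨{ toFun := τ, map_one' := ?_, map_zero' := ?_, map_mul' := ?_, map_add' := ?_ },
    fun a => huniq (p := a) (q := 1) (by simp) (by simp) (by simp), fun b => ?_⟩
  · exact huniq (p := 1) (q := 1) (by simp) (by simp) (by simp)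
  · intro b b'
    obtain ⟨p, q, hq, h⟩ := b.2
    obtain ⟨p', q', hq', h'⟩ := b'.2
    refine huniq (p := p * p') (q := q * q') (by simpa only [map_mul] using hq.mul hq') ?_ ?_
    · simp only [Subring.coe_mul, map_mul, ← h, ← h']
      ring
    · simp only [map_mul, ← hτ b p q h, ← hτ b' p' q' h']
      ring
  · exact huniq (p := 0) (q := 1) (by simp) (by simp) (by simp)
  · intro b b'
    obtain ⟨p, q, hq, h⟩ := b.2
    obtain ⟨p', q', hq', h'⟩ := b'.2
    refine huniq (p := p * q' + q * p') (q := q * q')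
      (by simpa only [map_mul] using hq.mul hq') ?_ ?_
    · simp only [Subring.coe_add, map_mul, map_add, ← h, ← h']
      ring
    · simp only [map_mul, map_add, ← hτ b p q h, ← hτ b' p' q' h']
      ring
  · obtain ⟨p, q, hq, h⟩ := b.2
    have hχτ : ε (φ q) * χ (τ b) = ε (φ p) := by
      simpa only [map_mul, hχ] using congrArg χ (hτ b p q h)
    exact hq.mul_left_cancel (hχτ.trans (by rw [← h, map_mul]))

end RegularSubring

open ComplexOrder in
lemma posDef_of_sum_row_lt_diag {𝕜 n : Type*} [RCLike 𝕜] [Fintype n] [DecidableEq n]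
    {M : Matrix n n 𝕜} (hM : M.IsHermitian)
    (h : ∀ i, ∑ j ∈ Finset.univ.erase i, ‖M i j‖ < RCLike.re (M i i)) : M.PosDef := by
  refine hM.posDef_iff_eigenvalues_pos.2 fun i => ?_
  have heig : Module.End.HasEigenvalue (toLin' M) (hM.eigenvalues i : 𝕜) := by
    rw [Module.End.hasEigenvalue_iff_mem_spectrum, spectrum_toLin', ← RCLike.algebraMap_eq_ofReal,
      spectrum.algebraMap_mem_iff]
    exact hM.eigenvalues_mem_spectrum_real i
  obtain ⟨m, hm⟩ := eigenvalue_mem_ball heig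
  rw [Metric.mem_closedBall, dist_comm, dist_eq_norm] at hm
  have hre := (RCLike.re_le_norm _).trans_lt (hm.trans_lt (h m))
  rw [map_sub, RCLike.ofReal_re] at hre
  linarith

lemma eventually_posDef_one_add_smul {n : Type*} [Finite n] [DecidableEq n] {W : Matrix n n ℝ}
    (hW : W.IsSymm) : ∀ᶠ s : ℝ in 𝓝 0, (1 + s • W).PosDef := by
  cases nonempty_fintype n
  have hdominant (i : n) : ∀ᶠ s : ℝ in 𝓝 0,
      ∑ j ∈ Finset.univ.erase i, ‖(1 + s • W) i j‖ < (1 + s • W) i i := by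
    refine ContinuousAt.eventually_lt (by fun_prop) (by fun_prop) ?_
    rw [Finset.sum_eq_zero fun j hj => by simp [one_apply_ne (Finset.ne_of_mem_erase hj).symm]]
    simp
  filter_upwards [Filter.eventually_all.2 hdominant] with s hs
  refine posDef_of_sum_row_lt_diag ?_ hs
  rw [IsHermitian, conjTranspose_eq_transpose_of_trivial]
  simp [hW.eq]

instance isLocalHom_constantCoeff {R : Type*} [Ring R] :
    IsLocalHom (constantCoeff (R := R)) :=
  ⟨fun _ => PowerSeries.isUnit_iff_constantCoeff.2⟩

lemma map_coeff_mul {l m n R : Type*} [Fintype m] [Semiring R]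
    (M : Matrix l m R⟦X⟧) (N : Matrix m n R⟦X⟧) (d : ℕ) :
    (M * N).map (coeff d) =
      ∑ p ∈ Finset.HasAntidiagonal.antidiagonal d, M.map (coeff p.1) * N.map (coeff p.2) := by
  ext i j
  simp only [map_apply, mul_apply, map_sum, PowerSeries.coeff_mul, Matrix.sum_apply]
  exact Finset.sum_comm

lemma map_coeff_one_sub {n R : Type*} [DecidableEq n] [Ring R] (M : Matrix n n R⟦X⟧) {d : ℕ}
    (hd : d ≠ 0) : (1 - M).map (coeff d) = -M.map (coeff d) := by
  ext i j
  simp [one_apply, apply_ite, PowerSeries.coeff_one, hd]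

section Congruence

variable {n R : Type*} [Fintype n] [DecidableEq n] [Semiring R] {P S : Matrix n n R⟦X⟧}

lemma map_coeff_one_congruence (hP : P.map constantCoeff = 1) (hS : S.map constantCoeff = 1) :
    (Pᵀ * S * P).map (coeff 1) = (P.map (coeff 1))ᵀ + S.map (coeff 1) + P.map (coeff 1) := by
  simp only [map_coeff_mul, Finset.Nat.sum_antidiagonal_eq_sum_range_succ_mk,
    Finset.sum_range_succ, Finset.sum_range_zero, Nat.sub_zero, Nat.sub_self, transpose_map,
    PowerSeries.coeff_zero_eq_constantCoeff, hP, hS, transpose_one, zero_add, one_mul, mul_one]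
  abel

lemma map_coeff_two_congruence (hP : P.map constantCoeff = 1) (hS : S.map constantCoeff = 1) :
    (Pᵀ * S * P).map (coeff 2) = (P.map (coeff 2))ᵀ + S.map (coeff 2) + P.map (coeff 2) +
      (P.map (coeff 1))ᵀ * S.map (coeff 1) + S.map (coeff 1) * P.map (coeff 1) +
      (P.map (coeff 1))ᵀ * P.map (coeff 1) := by
  simp only [map_coeff_mul, Finset.Nat.sum_antidiagonal_eq_sum_range_succ_mk,
    Finset.sum_range_succ, Finset.sum_range_zero, Nat.sub_zero, Nat.sub_self, Nat.reduceSub,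
    transpose_map, PowerSeries.coeff_zero_eq_constantCoeff, hP, hS, transpose_one, one_mul,
    mul_one, zero_add, Matrix.add_mul, Matrix.zero_mul]
  abel

end Congruence

section RingHom

variable {n R R' : Type*} [DecidableEq n] [Ring R] [Ring R']

lemma map_one_sub (f : R →+* R') (M : Matrix n n R) : (1 - M).map f = 1 - M.map f := by
  rw [Matrix.map_sub f (map_sub f), Matrix.map_one f (map_zero f) (map_one f)]

lemma map_one_sub_congruence [Fintype n] (f : R →+* R') (Λ S : Matrix n n R) :
    ((1 - Λ)ᵀ * S * (1 - Λ)).map f = (1 - Λ.map f)ᵀ * S.map f * (1 - Λ.map f) := by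
  rw [Matrix.map_mul, Matrix.map_mul, transpose_map, map_one_sub]

end RingHom

namespace MixedGraph

variable {V : Type*} {G G' : MixedGraph V}

lemma Acyclic.wellFounded [Finite V] (hG : G.Acyclic) : WellFounded G.D := by
  have : Std.Irrefl (Relation.TransGen G.D) := ⟨hG⟩
  exact Subrelation.wf (fun h => Relation.TransGen.single h)
    (Finite.wellFounded_of_trans_of_irrefl (Relation.TransGen G.D))

lemma Acyclic.ne_of_D (hG : G.Acyclic) {v w : V} (h : G.D v w) : v ≠ w := by
  rintro rfl
  exact hG v (.single h)

lemma Acyclic.not_D_of_D (hG : G.Acyclic) {v w : V} (h : G.D v w) : ¬ G.D w v :=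
  fun h' => hG v (.tail (.single h) h')

lemma IsBAP.not_B_of_D (hG : G.IsBAP) {v w : V} (h : G.D v w) : ¬ G.B v w :=
  fun h' => (hG.2 v w (hG.1.ne_of_D h)).2.1 ⟨h, h'⟩

lemma adj.symm (h : G.adj v w) : G.adj w v :=
  ⟨h.1.symm, h.2.elim (.inr ∘ .inl) (Or.elim · .inl (.inr ∘ .inr ∘ G.symm v w))⟩

variable [Fintype V]

/-- The compatible parameter pairs `(Λ, Ω)` of `G`. -/
structure Params (G : MixedGraph V) where
  lam : Matrix V V ℝ
  om : Matrix V V ℝ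
  lamCompat : G.LamCompat lam
  omCompat : G.OmCompat om

/-- The matrix `Λ` of edge coefficients, as a matrix of functions on the parameter space. -/
def genericLam (G : MixedGraph V) : Matrix V V (G.Params → ℝ) := of fun u v x => x.lam u v

lemma genericLam_eq_zero {u v : V} (h : ¬ G.D u v) : G.genericLam u v = 0 :=
  funext fun x => x.lamCompat u v h

variable [DecidableEq V]

lemma model_subset_algModel : G.model ⊆ G.algModel := fun T hT _ hp => hp T hT

lemma Acyclic.isUnit_det_one_sub (hG : G.Acyclic) {Λ : Matrix V V ℝ} (hΛ : G.LamCompat Λ) :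
    IsUnit (1 - Λ).det := by
  rw [isUnit_iff_ne_zero]
  intro hdet
  obtain ⟨x, hx, hx0⟩ := exists_vecMul_eq_zero_iff.2 hdet
  refine hx (funext fun w => ?_)
  induction w using hG.wellFounded.induction with
  | _ w ih =>
    have hw := congrFun hx0 w
    rw [vecMul_sub, vecMul_one, Pi.sub_apply, Pi.zero_apply, sub_eq_zero] at hw
    rw [hw]
    refine Finset.sum_eq_zero fun u _ => ?_
    by_cases hu : G.D u w
    · simp [ih u hu]
    · simp [hΛ u w hu]

namespace Params

/-- The covariance matrix parametrized by `x`. -/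
noncomputable def cov (x : G.Params) : Matrix V V ℝ :=
  ((1 - x.lam)⁻¹)ᵀ * x.om * (1 - x.lam)⁻¹

/-- The base point `(0, 1)`, whose covariance matrix is the identity. -/
def base (G : MixedGraph V) : G.Params where
  lam := 0
  om := 1
  lamCompat _ _ _ := rfl
  omCompat := ⟨PosDef.one, fun _ _ h _ _ => one_apply_ne h⟩

lemma cov_base : (base G).cov = 1 := by
  simp [cov, base]

lemma cov_relation (hG : G.Acyclic) (x : G.Params) :
    (1 - x.lam)ᵀ * x.cov * (1 - x.lam) = x.om := by
  have hinv : (1 - x.lam)⁻¹ * (1 - x.lam) = 1 :=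
    nonsing_inv_mul _ (hG.isUnit_det_one_sub x.lamCompat)
  have hinvT : (1 - x.lam)ᵀ * ((1 - x.lam)⁻¹)ᵀ = 1 := by
    rw [← transpose_mul, hinv, transpose_one]
  calc (1 - x.lam)ᵀ * x.cov * (1 - x.lam)
      = ((1 - x.lam)ᵀ * ((1 - x.lam)⁻¹)ᵀ) * x.om * ((1 - x.lam)⁻¹ * (1 - x.lam)) := by
        simp only [cov, Matrix.mul_assoc]
    _ = x.om := by rw [hinv, hinvT, Matrix.one_mul, Matrix.mul_one]

end Params

/-- The covariance matrix, as a matrix of functions on the parameter space. -/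
noncomputable def genericCov (G : MixedGraph V) : Matrix V V (G.Params → ℝ) :=
  of fun v w x => x.cov v w

/-- Substitution of the covariances for the variables of a polynomial, whose kernel is the
vanishing ideal of the model. -/
noncomputable def substCov (G : MixedGraph V) : MvPolynomial (V × V) ℝ →+* (G.Params → ℝ) :=
  (MvPolynomial.aeval fun e => G.genericCov e.1 e.2).toRingHom

/-- Evaluation of functions on the parameter space at the base point. -/
def evalBase (G : MixedGraph V) : (G.Params → ℝ) →+* ℝ :=
  Pi.evalRingHom _ (Params.base G)

lemma substCov_X (v w : V) : G.substCov (MvPolynomial.X (v, w)) = G.genericCov v w := by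
  simp [substCov]

lemma substCov_apply (p : MvPolynomial (V × V) ℝ) (x : G.Params) :
    G.substCov p x = MvPolynomial.eval (fun e => x.cov e.1 e.2) p := by
  have : (Pi.evalRingHom (fun _ => ℝ) x).comp G.substCov =
      MvPolynomial.eval (fun e => x.cov e.1 e.2) := by
    ext <;> simp [substCov, genericCov]
  exact RingHom.congr_fun this p

lemma mem_ker_substCov {p : MvPolynomial (V × V) ℝ} : p ∈ RingHom.ker G.substCov ↔
    ∀ T ∈ G.model, MvPolynomial.eval (fun e => T e.1 e.2) p = 0 := by
  rw [RingHom.mem_ker]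
  constructor
  · rintro h T ⟨Λ, Ω, hΛ, hΩ, rfl⟩
    exact (substCov_apply p ⟨Λ, Ω, hΛ, hΩ⟩).symm.trans (congrFun h _)
  · intro h
    ext x
    rw [substCov_apply]
    exact h _ ⟨x.lam, x.om, x.lamCompat, x.omCompat, rfl⟩

lemma map_evalBase_genericLam : G.genericLam.map G.evalBase = 0 := rfl

lemma map_evalBase_genericCov : G.genericCov.map G.evalBase = 1 := Params.cov_base

lemma Acyclic.genericCov_relation (hG : G.Acyclic) {v w : V} (hvw : v ≠ w) (hB : ¬ G.B v w) :
    ((1 - G.genericLam)ᵀ * G.genericCov * (1 - G.genericLam) :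
      Matrix V V (G.Params → ℝ)) v w = 0 := by
  ext x
  have hx := congrFun₂ (map_one_sub_congruence (Pi.evalRingHom _ x) G.genericLam G.genericCov) v w
  refine hx.trans ((congrFun₂ (x.cov_relation hG) v w).trans ?_)
  exact x.omCompat.2 v w hvw hB fun h => hB (G.symm _ _ h)

lemma genericCov_mem_regularSubring (v w : V) :
    G.genericCov v w ∈ regularSubring G.substCov G.evalBase := by
  rw [← substCov_X]
  exact map_mem_regularSubring _

/-- The entries of column `v` of `Λ` at the parents of `v` solve the linear system saying that `Ω`
vanishes between `v` and its parents. Its coefficients involve only columns of `Λ` belonging to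
parents of `v`, and at the base point its matrix is the identity. -/
lemma IsBAP.genericLam_mem_regularSubring (hG : G.IsBAP) (u v : V) :
    G.genericLam u v ∈ regularSubring G.substCov G.evalBase := by
  classical
  induction v using hG.1.wellFounded.induction generalizing u with
  | _ v ih =>
  by_cases huv : G.D u v
  swap
  · rw [genericLam_eq_zero huv]
    exact zero_mem _
  let K := (1 - G.genericLam)ᵀ * G.genericCov
  have hK {u : V} (hu : G.D u v) (w : V) : K u w ∈ regularSubring G.substCov G.evalBase := by
    simp only [K, Matrix.sub_mul, transpose_sub, transpose_one, Matrix.one_mul, Matrix.sub_apply,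
      mul_apply, transpose_apply]
    exact sub_mem (genericCov_mem_regularSubring u w)
      (sum_mem fun z _ => mul_mem (ih u hu z) (genericCov_mem_regularSubring z w))
  let ι : {u // G.D u v} → V := Subtype.val
  have hdet : IsUnit (G.evalBase (K.submatrix ι ι).det) := by
    have hK₀ : K.map G.evalBase = 1 := by
      rw [Matrix.map_mul, transpose_map, map_one_sub, map_evalBase_genericLam,
        map_evalBase_genericCov, sub_zero, transpose_one, Matrix.one_mul]
    rw [RingHom.map_det, RingHom.mapMatrix_apply, ← submatrix_map, hK₀,
      submatrix_one ι Subtype.val_injective, det_one]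
    exact isUnit_one
  have hsystem : K.submatrix ι ι *ᵥ (fun i => G.genericLam (ι i) v) = fun i => K (ι i) v := by
    ext1 i
    have hrel := hG.1.genericCov_relation (hG.1.ne_of_D i.2) (hG.not_B_of_D i.2)
    rw [Matrix.mul_sub, Matrix.mul_one, Matrix.sub_apply, sub_eq_zero] at hrel
    refine Eq.trans ?_ hrel.symm
    refine Fintype.sum_of_injective ι Subtype.val_injective _ _ (fun y hy => ?_) fun _ => rfl
    exact (congrArg (K i y * ·) (genericLam_eq_zero fun h => hy ⟨⟨y, h⟩, rfl⟩)).trans (mul_zero _)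
  exact mem_regularSubring_of_mulVec_eq (fun i j => hK i.2 (ι j)) (fun i => hK i.2 v) hdet hsystem
    (⟨u, huv⟩ : {u // G.D u v})

/-- `Λ` is a matrix of edge coefficients over `R` that is compatible with `G`, specializes along `χ`
to the base point, and solves the equations `Ω v w = 0` for the covariance matrix `S`. -/
structure IsLift {R : Type*} [CommRing R] (G : MixedGraph V) (χ : R →+* ℝ) (S Λ : Matrix V V R) :
    Prop where
  lam_eq_zero : ∀ {u v}, ¬ G.D u v → Λ u v = 0
  map_lam : Λ.map χ = 0
  relation : ∀ {v w}, v ≠ w → ¬ G.B v w → ((1 - Λ)ᵀ * S * (1 - Λ) : Matrix V V R) v w = 0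

lemma IsBAP.exists_isLift (hG : G.IsBAP) {R : Type*} [CommRing R]
    {σ : MvPolynomial (V × V) ℝ →+* R} {χ : R →+* ℝ} [IsLocalHom χ]
    (hχ : ∀ p, χ (σ p) = MvPolynomial.eval (fun e => (1 : Matrix V V ℝ) e.1 e.2) p)
    (hσ : ∀ p, (∀ T ∈ G.model, MvPolynomial.eval (fun e => T e.1 e.2) p = 0) → σ p = 0) :
    ∃ Λ, G.IsLift χ ((mvPolynomialX V V ℝ).map σ) Λ := by
  obtain ⟨τ, hτσ, hχτ⟩ := exists_ringHom_regularSubring (φ := G.substCov) (ε := G.evalBase)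
    (σ := σ) (χ := χ) (fun p => by
      rw [hχ, ← Params.cov_base (G := G)]
      exact (substCov_apply p _).symm) fun p hp => hσ p (mem_ker_substCov.1 hp)
  let lam : Matrix V V (regularSubring G.substCov G.evalBase) :=
    of fun u v => ⟨G.genericLam u v, hG.genericLam_mem_regularSubring u v⟩
  let cov : Matrix V V (regularSubring G.substCov G.evalBase) :=
    of fun v w => ⟨G.substCov (MvPolynomial.X (v, w)), map_mem_regularSubring _⟩
  have hcov : cov.map τ = (mvPolynomialX V V ℝ).map σ := by
    ext1 v w
    exact hτσ _
  refine ⟨lam.map τ, fun {u v} h => ?_, ?_, fun {v w} hvw hB => ?_⟩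
  · have : lam u v = 0 := Subtype.ext (genericLam_eq_zero h)
    rw [map_apply, this, map_zero]
  · ext u v
    exact hχτ (lam u v)
  · have hcov' : cov.map (Subring.subtype _) = G.genericCov := by
      ext1 v w
      exact substCov_X v w
    have hrel : ((1 - lam)ᵀ * cov * (1 - lam) : Matrix V V _) v w = 0 := by
      apply Subtype.val_injective
      refine (congrFun₂ (map_one_sub_congruence (Subring.subtype _) lam cov) v w).trans ?_
      rw [hcov']
      exact hG.1.genericCov_relation hvw hB
    rw [← hcov, ← map_one_sub_congruence, map_apply, hrel, map_zero]

lemma IsBAP.exists_isLift_of_infinite (hG : G.IsBAP) {S : Matrix V V ℝ[X]}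
    (hS₀ : S.map (Polynomial.eval 0) = 1)
    (hS : {s : ℝ | S.map (Polynomial.eval s) ∈ G.algModel}.Infinite) :
    ∃ Λ, G.IsLift constantCoeff (S.map Polynomial.coeToPowerSeries.ringHom) Λ := by
  let ρ : MvPolynomial (V × V) ℝ →+* ℝ[X] :=
    (MvPolynomial.aeval fun e : V × V => S e.1 e.2).toRingHom
  have hρ (s : ℝ) (p : MvPolynomial (V × V) ℝ) : (ρ p).eval s =
      MvPolynomial.eval (fun e => S.map (Polynomial.eval s) e.1 e.2) p := by
    have : (Polynomial.evalRingHom s).comp ρ =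
        MvPolynomial.eval (fun e => S.map (Polynomial.eval s) e.1 e.2) := by
      ext <;> simp [ρ]
    exact RingHom.congr_fun this p
  have hX : S = (mvPolynomialX V V ℝ).map ρ := by
    ext1 v w
    simp [ρ]
  rw [hX, map_map]
  refine hG.exists_isLift (σ := Polynomial.coeToPowerSeries.ringHom.comp ρ) (fun p => ?_)
    fun p hp => ?_
  · rw [← hS₀, ← hρ]
    simp [Polynomial.coeff_zero_eq_eval_zero]
  · have hzero : ρ p = 0 := by
      refine Polynomial.eq_zero_of_infinite_isRoot _ (hS.mono fun s hs => ?_)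
      rw [Set.mem_ofPred_eq, Polynomial.IsRoot, hρ]
      exact hs p hp
    rw [RingHom.comp_apply, hzero, map_zero]

end MixedGraph

section Curve

variable {n R : Type*} [DecidableEq n] [CommSemiring R]

/-- The line `1 + X • M` of matrices. -/
noncomputable def lineThroughOne (M : Matrix n n R) : Matrix n n R[X] :=
  1 + (Polynomial.X : R[X]) • M.map Polynomial.C

section Line

variable (M : Matrix n n R)

lemma lineThroughOne_map_eval (s : R) : (lineThroughOne M).map (Polynomial.eval s) = 1 + s • M := by
  ext i j
  simp [lineThroughOne, one_apply, apply_ite, mul_comm s]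

/-- The line `1 + X • M`, with power series as entries. -/
noncomputable def lineSeries : Matrix n n R⟦X⟧ :=
  (lineThroughOne M).map Polynomial.coeToPowerSeries.ringHom

lemma lineSeries_map_constantCoeff : (lineSeries M).map constantCoeff = 1 := by
  ext i j
  simp [lineSeries, lineThroughOne, one_apply, apply_ite (Polynomial.coeff · 0)]

lemma lineSeries_map_coeff_one : (lineSeries M).map (coeff 1) = M := by
  ext i j
  simp [lineSeries, lineThroughOne, one_apply, apply_ite, PowerSeries.coeff_one]

lemma lineSeries_map_coeff_two : (lineSeries M).map (coeff 2) = 0 := by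
  ext i j
  simp [lineSeries, lineThroughOne, one_apply, apply_ite, PowerSeries.coeff_one]

end Line

variable [Fintype n] (L W : Matrix n n R)

/-- The curve of matrices `(1 + sL)ᵀ (1 + sW) (1 + sL)`. If `L * L = 0`, this is the covariance
matrix with edge coefficients `sL` and error covariance `1 + sW`. -/
noncomputable def covCurve : Matrix n n R[X] :=
  (lineThroughOne L)ᵀ * lineThroughOne W * lineThroughOne L

lemma covCurve_map_eval (s : R) :
    (covCurve L W).map (Polynomial.eval s) = (1 + s • L)ᵀ * (1 + s • W) * (1 + s • L) := by
  simp only [← lineThroughOne_map_eval, ← Polynomial.coe_evalRingHom, covCurve, Matrix.map_mul,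
    transpose_map]

/-- The matrix of power series given by `covCurve L W`. -/
noncomputable def covSeries : Matrix n n R⟦X⟧ :=
  (covCurve L W).map Polynomial.coeToPowerSeries.ringHom

lemma covSeries_eq : covSeries L W = (lineSeries L)ᵀ * lineSeries W * lineSeries L := by
  rw [covSeries, covCurve, Matrix.map_mul, Matrix.map_mul, transpose_map]
  rfl

lemma covSeries_map_coeff_one : (covSeries L W).map (coeff 1) = Lᵀ + W + L := by
  rw [covSeries_eq, map_coeff_one_congruence (lineSeries_map_constantCoeff L)
      (lineSeries_map_constantCoeff W), lineSeries_map_coeff_one, lineSeries_map_coeff_one]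

lemma covSeries_map_coeff_two :
    (covSeries L W).map (coeff 2) = Lᵀ * W + W * L + Lᵀ * L := by
  rw [covSeries_eq, map_coeff_two_congruence (lineSeries_map_constantCoeff L)
      (lineSeries_map_constantCoeff W)]
  simp only [lineSeries_map_coeff_one, lineSeries_map_coeff_two, transpose_zero, zero_add]

lemma covSeries_map_constantCoeff : (covSeries L W).map constantCoeff = 1 := by
  simp only [covSeries_eq, Matrix.map_mul, transpose_map, lineSeries_map_constantCoeff,
    transpose_one, Matrix.mul_one]

end Curve

section StarMatrix

variable {n R : Type*} [DecidableEq n] [CommSemiring R]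

/-- The symmetric matrix whose row and column at `v` are `c`, with `2 * c v` on the diagonal, and
whose other entries vanish. -/
def starMatrix (v : n) (c : n → R) : Matrix n n R :=
  vecMulVec c (Pi.single v 1) + vecMulVec (Pi.single v 1) c

lemma starMatrix_isSymm (v : n) (c : n → R) : (starMatrix v c).IsSymm := by
  rw [IsSymm, starMatrix, transpose_add, transpose_vecMulVec, transpose_vecMulVec, add_comm]

end StarMatrix

namespace MixedGraph

variable {V : Type*} {G G' : MixedGraph V}

open Classical in
/-- The entries of `C` at the directed edges of `G`. -/
noncomputable def directedPart {R : Type*} [Zero R] (G : MixedGraph V) (C : Matrix V V R) :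
    Matrix V V R :=
  of fun u v => if G.D u v then C u v else 0

variable [Fintype V]

/-- The second-order coefficient which a curve through the identity matrix in the model of `G`
with first-order coefficient `C` is forced to have at nonadjacent pairs of vertices. -/
noncomputable def acceleration {R : Type*} [Ring R] (G : MixedGraph V) (C : Matrix V V R) :
    Matrix V V R :=
  (G.directedPart C)ᵀ * C + C * G.directedPart C - (G.directedPart C)ᵀ * G.directedPart C

variable [DecidableEq V]

namespace IsLift

variable {S Λ : Matrix V V ℝ⟦X⟧} {v w : V}

lemma one_sub_map_constantCoeff (h : G.IsLift constantCoeff S Λ) :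
    (1 - Λ).map constantCoeff = 1 := by
  rw [map_one_sub, h.map_lam, sub_zero]

lemma map_coeff_one_apply (h : G.IsLift constantCoeff S Λ) (hS : S.map constantCoeff = 1)
    (hvw : v ≠ w) (hB : ¬ G.B v w) :
    S.map (coeff 1) v w = Λ.map (coeff 1) w v + Λ.map (coeff 1) v w := by
  have hrel := congrFun₂ (map_coeff_one_congruence h.one_sub_map_constantCoeff hS) v w
  rw [map_apply, h.relation hvw hB, map_zero, map_coeff_one_sub Λ one_ne_zero] at hrel
  simp only [Matrix.add_apply, transpose_apply, Matrix.neg_apply] at hrel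
  linarith

lemma map_coeff_two_apply (h : G.IsLift constantCoeff S Λ) (hS : S.map constantCoeff = 1)
    (hvw : v ≠ w) (hB : ¬ G.B v w) :
    S.map (coeff 2) v w = Λ.map (coeff 2) w v + Λ.map (coeff 2) v w +
      ((Λ.map (coeff 1))ᵀ * S.map (coeff 1) + S.map (coeff 1) * Λ.map (coeff 1) -
        (Λ.map (coeff 1))ᵀ * Λ.map (coeff 1)) v w := by
  have hrel := congrFun₂ (map_coeff_two_congruence h.one_sub_map_constantCoeff hS) v w
  rw [map_apply, h.relation hvw hB, map_zero, map_coeff_one_sub Λ one_ne_zero,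
    map_coeff_one_sub Λ two_ne_zero] at hrel
  simp only [transpose_neg, Matrix.neg_mul, Matrix.mul_neg, neg_neg,
    Matrix.add_apply, transpose_apply, Matrix.neg_apply] at hrel
  simp only [Matrix.add_apply, Matrix.sub_apply]
  linarith

lemma map_coeff_apply_eq_zero (h : G.IsLift constantCoeff S Λ) (hD : ¬ G.D v w) (d : ℕ) :
    Λ.map (coeff d) v w = 0 := by
  rw [map_apply, h.lam_eq_zero hD, map_zero]

lemma map_coeff_one_eq_directedPart (h : G.IsLift constantCoeff S Λ) (hG : G.IsBAP)
    (hS : S.map constantCoeff = 1) : Λ.map (coeff 1) = G.directedPart (S.map (coeff 1)) := by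
  ext v w
  rw [directedPart, of_apply]
  split_ifs with hD
  · rw [h.map_coeff_one_apply hS (hG.1.ne_of_D hD) (hG.not_B_of_D hD),
      h.map_coeff_apply_eq_zero (hG.1.not_D_of_D hD), zero_add]
  · exact h.map_coeff_apply_eq_zero hD 1

lemma map_coeff_one_apply_eq_zero (h : G.IsLift constantCoeff S Λ) (hS : S.map constantCoeff = 1)
    (hvw : v ≠ w) (hadj : ¬ G.adj v w) : S.map (coeff 1) v w = 0 := by
  rw [h.map_coeff_one_apply hS hvw fun hB => hadj ⟨hvw, .inr (.inr hB)⟩,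
    h.map_coeff_apply_eq_zero fun hD => hadj ⟨hvw, .inr (.inl hD)⟩,
    h.map_coeff_apply_eq_zero fun hD => hadj ⟨hvw, .inl hD⟩, add_zero]

lemma map_coeff_two_apply_eq_acceleration (h : G.IsLift constantCoeff S Λ) (hG : G.IsBAP)
    (hS : S.map constantCoeff = 1) (hvw : v ≠ w) (hadj : ¬ G.adj v w) :
    S.map (coeff 2) v w = G.acceleration (S.map (coeff 1)) v w := by
  rw [h.map_coeff_two_apply hS hvw fun hB => hadj ⟨hvw, .inr (.inr hB)⟩,
    h.map_coeff_apply_eq_zero fun hD => hadj ⟨hvw, .inr (.inl hD)⟩,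
    h.map_coeff_apply_eq_zero fun hD => hadj ⟨hvw, .inl hD⟩, add_zero, zero_add,
    h.map_coeff_one_eq_directedPart hG hS, acceleration]

end IsLift

section JetComparison

variable {L W : Matrix V V ℝ}

lemma covCurve_mem_model (hL : G.LamCompat L) (hLL : L * L = 0)
    (hW : ∀ v w, v ≠ w → ¬ G.B v w → W v w = 0) {s : ℝ} (hs : (1 + s • W).PosDef) :
    (covCurve L W).map (Polynomial.eval s) ∈ G.model := by
  refine ⟨s • L, 1 + s • W, fun v w h => ?_, ⟨hs, fun v w hvw hB _ => ?_⟩, ?_⟩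
  · rw [Matrix.smul_apply, hL v w h, smul_zero]
  · rw [Matrix.add_apply, one_apply_ne hvw, Matrix.smul_apply, hW v w hvw hB, smul_zero, add_zero]
  · have hinv : (1 - s • L)⁻¹ = 1 + s • L := by
      refine inv_eq_right_inv ?_
      simp [Matrix.sub_mul, Matrix.mul_add, hLL]
    rw [hinv, covCurve_map_eval]

lemma IsBAP.exists_isLift_covSeries (hG' : G'.IsBAP) (hsub : G.model ⊆ G'.algModel)
    (hL : G.LamCompat L) (hLL : L * L = 0) (hWsymm : W.IsSymm)
    (hW : ∀ v w, v ≠ w → ¬ G.B v w → W v w = 0) :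
    ∃ Λ, G'.IsLift constantCoeff (covSeries L W) Λ := by
  refine hG'.exists_isLift_of_infinite (by simp [covCurve_map_eval])
    (infinite_of_mem_nhds (0 : ℝ) ?_)
  filter_upwards [eventually_posDef_one_add_smul hWsymm] with s hs
  exact hsub (covCurve_mem_model hL hLL hW hs)

open Classical in
lemma acceleration_starMatrix {R : Type*} [CommRing R] {v : V} (c : V → R) {a b : V}
    (ha : a ≠ v) (hb : b ≠ v) :
    G.acceleration (starMatrix v c) a b =
      (if G.D v a then c a else 0) * c b + c a * (if G.D v b then c b else 0) -
        (if G.D v a then c a else 0) * (if G.D v b then c b else 0) := by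
  simp only [acceleration, Matrix.sub_apply, Matrix.add_apply, mul_apply, transpose_apply]
  rw [Finset.sum_eq_single v, Finset.sum_eq_single v, Finset.sum_eq_single v]
  all_goals simp +contextual [directedPart, starMatrix, vecMulVec_apply, ha, hb]

/-- The edge coefficients `ℓ` into `v` and the error covariances `ω` with `v` define a curve in the
model of `G` whose velocity is the star matrix of `ℓ + ω` and whose acceleration vanishes outside
the row and column of `v`. -/
lemma IsBAP.starMatrix_jet (hG' : G'.IsBAP) (hsub : G.model ⊆ G'.algModel) {v : V} {ℓ ω : V → ℝ}
    (hℓv : ℓ v = 0) (hℓ : ∀ x, ¬ G.D x v → ℓ x = 0) (hω : ∀ x, ¬ G.B x v → ω x = 0)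
    {a b : V} (hab : a ≠ b) (hadj : ¬ G'.adj a b) :
    starMatrix v (ℓ + ω) a b = 0 ∧
      (a ≠ v → b ≠ v → G'.acceleration (starMatrix v (ℓ + ω)) a b = 0) := by
  let L : Matrix V V ℝ := vecMulVec ℓ (Pi.single v 1)
  let W : Matrix V V ℝ := starMatrix v ω
  have hL : G.LamCompat L := fun x y hxy => by
    rcases eq_or_ne y v with rfl | hy
    · simp [L, vecMulVec_apply, hℓ x hxy]
    · simp [L, vecMulVec_apply, hy]
  have hLL : L * L = 0 := by
    simp [L, vecMulVec_mul_vecMulVec, hℓv]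
  have hW (x y : V) (hxy : x ≠ y) (hB : ¬ G.B x y) : W x y = 0 := by
    rcases eq_or_ne y v with rfl | hy
    · simp [W, starMatrix, vecMulVec_apply, hω x hB, hxy]
    · rcases eq_or_ne x v with rfl | hx
      · simp [W, starMatrix, vecMulVec_apply, hω y fun h => hB (G.symm _ _ h), hy]
      · simp [W, starMatrix, vecMulVec_apply, hx, hy]
  have hvelocity : Lᵀ + W + L = starMatrix v (ℓ + ω) := by
    simp only [L, W, starMatrix, transpose_vecMulVec, vecMulVec_add, add_vecMulVec]
    abel
  obtain ⟨Λ, hΛ⟩ := hG'.exists_isLift_covSeries hsub hL hLL (starMatrix_isSymm v ω) hW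
  have hS := covSeries_map_constantCoeff L W
  have hfirst := hΛ.map_coeff_one_apply_eq_zero hS hab hadj
  have hsecond := hΛ.map_coeff_two_apply_eq_acceleration hG' hS hab hadj
  rw [covSeries_map_coeff_one, hvelocity] at hfirst hsecond
  refine ⟨hfirst, fun ha hb => ?_⟩
  rw [← hsecond, covSeries_map_coeff_two]
  simp [L, mul_apply, vecMulVec_apply, ha, hb]

lemma IsBAP.exists_starMatrix_jet (hG' : G'.IsBAP) (hsub : G.model ⊆ G'.algModel) (v : V) :
    ∃ c : V → ℝ, (∀ x, x ≠ v → G.D x v ∨ G.B x v → c x = 1) ∧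
      ∀ a b, a ≠ b → ¬ G'.adj a b → starMatrix v c a b = 0 ∧
        (a ≠ v → b ≠ v → G'.acceleration (starMatrix v c) a b = 0) := by
  classical
  let ℓ : V → ℝ := {x | x ≠ v ∧ G.D x v}.indicator 1
  let ω : V → ℝ := {x | ¬ G.D x v ∧ G.B x v}.indicator 1
  refine ⟨ℓ + ω, fun x hx h => ?_, fun a b hab hadj => hG'.starMatrix_jet hsub ?_ ?_ ?_ hab hadj⟩
  · by_cases hD : G.D x v
    · simp [ℓ, ω, hx, hD]
    · simp [ℓ, ω, hD, h.resolve_left hD]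
  · simp [ℓ]
  · intro x hD
    simp [ℓ, hD]
  · intro x hB
    simp [ω, hB]

end JetComparison

section ModelInclusion

variable {u v w : V}

lemma IsBAP.adj_of_arrowhead (hG' : G'.IsBAP) (hsub : G.model ⊆ G'.algModel) (huv : u ≠ v)
    (h : G.D u v ∨ G.B u v) : G'.adj u v := by
  by_contra hadj
  obtain ⟨c, hc, hjet⟩ := hG'.exists_starMatrix_jet hsub v
  have hzero := (hjet u v huv hadj).1
  simp [starMatrix, vecMulVec_apply, huv, hc u huv h] at hzero

lemma IsBAP.adj_of_model_subset (hG' : G'.IsBAP) (hsub : G.model ⊆ G'.algModel)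
    (h : G.adj v w) : G'.adj v w := by
  obtain ⟨hvw, hD | hD | hB⟩ := h
  · exact hG'.adj_of_arrowhead hsub hvw (.inl hD)
  · exact (hG'.adj_of_arrowhead hsub hvw.symm (.inl hD)).symm
  · exact hG'.adj_of_arrowhead hsub hvw (.inr hB)

lemma IsBAP.not_D_of_colliderTriple (hG' : G'.IsBAP) (hsub : G.model ⊆ G'.algModel)
    (h : G.ColliderTriple u v w) (hadj : ¬ G'.adj u w) : ¬ G'.D v u ∧ ¬ G'.D v w := by
  obtain ⟨huv, hvw, huw, hu, hw⟩ := h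
  obtain ⟨c, hc, hjet⟩ := hG'.exists_starMatrix_jet hsub v
  have hacc := (hjet u w huw hadj).2 huv hvw.symm
  rw [acceleration_starMatrix c huv hvw.symm, hc u huv hu, hc w hvw.symm hw] at hacc
  by_contra! h
  by_cases hDu : G'.D v u <;> by_cases hDw : G'.D v w <;> simp_all

lemma IsBAP.colliderTriple_of_model_subset (hG' : G'.IsBAP) (hsub : G.model ⊆ G'.algModel)
    (h : G.ColliderTriple u v w) (hadj : ¬ G'.adj u w) : G'.ColliderTriple u v w := by
  obtain ⟨hnu, hnw⟩ := hG'.not_D_of_colliderTriple hsub h hadj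
  obtain ⟨huv, hvw, huw, hu, hw⟩ := h
  have harrowhead {x : V} (hD : ¬ G'.D v x) (h : G'.adj x v) : G'.D x v ∨ G'.B x v :=
    h.2.imp_right (·.resolve_left hD)
  exact ⟨huv, hvw, huw, harrowhead hnu (hG'.adj_of_arrowhead hsub huv hu),
    harrowhead hnw (hG'.adj_of_arrowhead hsub hvw.symm hw)⟩

end ModelInclusion

end MixedGraph

/-- Corollary 1: Two algebraically equivalent BAPs have the same
skeleton and the same v-structures. -/
theorem skeleton_and_vStructures_eq_of_algModel_eq
    {V : Type*} [Fintype V] [DecidableEq V]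
    (G G' : MixedGraph V) (hG : G.IsBAP) (hG' : G'.IsBAP)
    (heq : G.algModel = G'.algModel) :
    (∀ v w, G.adj v w ↔ G'.adj v w) ∧
    (∀ u v w, G.VStructure u v w ↔ G'.VStructure u v w) := by
  have hsub : G.model ⊆ G'.algModel := heq ▸ MixedGraph.model_subset_algModel
  have hsub' : G'.model ⊆ G.algModel := heq ▸ MixedGraph.model_subset_algModel
  have hskeleton (v w : V) : G.adj v w ↔ G'.adj v w :=
    ⟨hG'.adj_of_model_subset hsub, hG.adj_of_model_subset hsub'⟩
  refine ⟨hskeleton, fun u v w => ⟨fun ⟨h, hadj⟩ => ?_, fun ⟨h, hadj⟩ => ?_⟩⟩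
  · have hadj' : ¬ G'.adj u w := mt (hskeleton u w).2 hadj
    exact ⟨hG'.colliderTriple_of_model_subset hsub h hadj', hadj'⟩
  · have hadj' : ¬ G.adj u w := mt (hskeleton u w).1 hadj
    exact ⟨hG.colliderTriple_of_model_subset hsub' h hadj', hadj'⟩
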